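/- Let k = (√3+1)/2 and c = (13 + 13√3 + √(2236 + 1898√3))/52 (so c ≈ 2.1122). Assume that (i) every instance of the chore division problem with two agents (arbitrary entitlements) admits a k-WMMS assignment, and (ii) every instance with three agents and equal entitlements (1/3, 1/3, 1/3) admits a (15/13)-MMS assignment. Then every instance of the asymmetric chore division problem with three agents admits a c-WMMS assignment. -/

import Mathlib

open Finset

/-- Cost of a bundle `S` of chores to agent `i`, given per-chore costs `V`. -/
noncomputable def costOf {n m : ℕ} (V : Fin n → Fin m → ℝ) (i : Fin n)
    (S : Finset (Fin m)) : ℝ :=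
  ∑ b ∈ S, V i b

/-- `A` is an `n`-partition of the chores: pairwise disjoint bundles whose union
is the set of all chores. -/
def IsPartition {n m : ℕ} (A : Fin n → Finset (Fin m)) : Prop :=
  (∀ j k, j ≠ k → Disjoint (A j) (A k)) ∧ Finset.univ.biUnion A = Finset.univ

/-- Weighted maximin share of agent `i` under entitlements `w`. -/
noncomputable def WMMS {n m : ℕ} (V : Fin n → Fin m → ℝ) (w : Fin n → ℝ)
    (i : Fin n) : ℝ :=
  sInf { x | ∃ A : Fin n → Finset (Fin m), IsPartition A ∧
    x = ⨆ j, costOf V i (A j) * (w i / w j) }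

/-- Unweighted maximin share of agent `i`. -/
noncomputable def MMS {n m : ℕ} (V : Fin n → Fin m → ℝ) (i : Fin n) : ℝ :=
  sInf { x | ∃ A : Fin n → Finset (Fin m), IsPartition A ∧
    x = ⨆ j, costOf V i (A j) }

/-!
Let `p` be an agent of least entitlement and `q` one of greatest. Ignoring the entitlements costs a
factor `w q / w p`, so a `β`-MMS assignment is a `β * (w q / w p)`-WMMS assignment. Alternatively,
leave `p` without chores: in the partition realising the share of another agent, hand the bundle of
`p` to `q`; this enlarges the share by a factor of at most `1 + w p / w q`, so a `k`-WMMS assignment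
among the other agents is a `k * (1 + w p / w q)`-WMMS assignment among all. When `c` solves
`c ^ 2 = k * (c + β)`, the two factors trade off exactly at `w q / w p = c / β`, and one of them is
at most `c` for every ratio.
-/

section ChoreDivision

variable {n n' m : ℕ}

lemma isPartition_iff_existsUnique {A : Fin n → Finset (Fin m)} :
    IsPartition A ↔ ∀ b, ∃! j, b ∈ A j := by
  constructor
  · rintro ⟨hdisj, hcover⟩ b
    obtain ⟨j, -, hj⟩ := mem_biUnion.1 (hcover ▸ mem_univ b)
    refine ⟨j, hj, fun l hl ↦ ?_⟩
    by_contra hne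
    exact disjoint_left.1 (hdisj l j hne) hl hj
  · refine fun hA ↦ ⟨fun j l hne ↦ disjoint_left.2 fun b hj hl ↦ hne ((hA b).unique hj hl), ?_⟩
    exact eq_univ_of_forall fun b ↦
      mem_biUnion.2 ⟨(hA b).choose, mem_univ _, (hA b).choose_spec.1⟩

lemma exists_isPartition (i : Fin n) : ∃ A : Fin n → Finset (Fin m), IsPartition A :=
  ⟨fun j ↦ {_b | i = j}, isPartition_iff_existsUnique.2 fun b ↦ by
    simp only [mem_filter, mem_univ, true_and, existsUnique_eq']⟩

/-- The division in which `j` receives all bundles `A l` with `g l = j`. Along an injection `g` it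
extends a division by empty bundles; along a surjection it merges bundles. -/
def reassign (g : Fin n → Fin n') (A : Fin n → Finset (Fin m)) (j : Fin n') : Finset (Fin m) :=
  ({l | g l = j} : Finset (Fin n)).biUnion A

section Reassign

variable {g : Fin n → Fin n'} {A : Fin n → Finset (Fin m)} {b : Fin m} {j : Fin n'}

lemma mem_reassign : b ∈ reassign g A j ↔ ∃ l, g l = j ∧ b ∈ A l := by
  simp [reassign]

lemma IsPartition.reassign (hA : IsPartition A) (g : Fin n → Fin n') :
    IsPartition (reassign g A) := by
  refine isPartition_iff_existsUnique.2 fun b ↦ ?_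
  obtain ⟨l, hl, hunique⟩ := isPartition_iff_existsUnique.1 hA b
  refine ⟨g l, mem_reassign.2 ⟨l, rfl, hl⟩, fun j hj ↦ ?_⟩
  obtain ⟨l', rfl, hl'⟩ := mem_reassign.1 hj
  rw [hunique l' hl']

lemma reassign_apply_of_injective (hg : g.Injective) (A : Fin n → Finset (Fin m)) (l : Fin n) :
    reassign g A (g l) = A l := by
  ext b
  simp [mem_reassign, hg.eq_iff]

lemma reassign_eq_empty (A : Fin n → Finset (Fin m)) (hj : ∀ l, g l ≠ j) :
    reassign g A j = ∅ := by
  simp [reassign, hj]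

lemma costOf_reassign {N : ℕ} (V : Fin N → Fin m → ℝ) (i : Fin N) (hA : IsPartition A)
    (g : Fin n → Fin n') (j : Fin n') :
    costOf V i (reassign g A j) = ∑ l with g l = j, costOf V i (A l) :=
  sum_biUnion fun l _ l' _ hne ↦ hA.1 l l' hne

end Reassign

section Shares

variable {V : Fin n → Fin m → ℝ} {w : Fin n → ℝ}

lemma costOf_nonneg (hV : ∀ i b, 0 ≤ V i b) (i : Fin n) (S : Finset (Fin m)) :
    0 ≤ costOf V i S :=
  sum_nonneg fun b _ ↦ hV i b

lemma isLeast_WMMS (V : Fin n → Fin m → ℝ) (w : Fin n → ℝ) (i : Fin n) :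
    IsLeast {x | ∃ A : Fin n → Finset (Fin m), IsPartition A ∧
      x = ⨆ j, costOf V i (A j) * (w i / w j)} (WMMS V w i) := by
  have hfinite : {x | ∃ A : Fin n → Finset (Fin m), IsPartition A ∧
      x = ⨆ j, costOf V i (A j) * (w i / w j)}.Finite := by
    refine (Set.finite_range fun A : Fin n → Finset (Fin m) ↦
      ⨆ j, costOf V i (A j) * (w i / w j)).subset ?_
    rintro _ ⟨A, -, rfl⟩
    exact ⟨A, rfl⟩
  obtain ⟨A, hA⟩ := exists_isPartition (m := m) i
  exact ⟨Set.Nonempty.csInf_mem ⟨_, A, hA, rfl⟩ hfinite,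
    fun _ hx ↦ csInf_le hfinite.bddBelow hx⟩

lemma exists_isPartition_mul_le_WMMS (V : Fin n → Fin m → ℝ) (w : Fin n → ℝ) (i : Fin n) :
    ∃ A : Fin n → Finset (Fin m), IsPartition A ∧
      ∀ j, costOf V i (A j) * (w i / w j) ≤ WMMS V w i := by
  obtain ⟨A, hA, hx⟩ := (isLeast_WMMS V w i).1
  refine ⟨A, hA, fun j ↦ ?_⟩
  rw [hx]
  exact le_ciSup (f := fun j ↦ costOf V i (A j) * (w i / w j)) (Set.finite_range _).bddAbove j

lemma WMMS_le {i : Fin n} {A : Fin n → Finset (Fin m)} {x : ℝ} (hA : IsPartition A)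
    (hx : ∀ j, costOf V i (A j) * (w i / w j) ≤ x) : WMMS V w i ≤ x :=
  have : Nonempty (Fin n) := ⟨i⟩
  ((isLeast_WMMS V w i).2 ⟨A, hA, rfl⟩).trans (ciSup_le hx)

lemma WMMS_nonneg (hV : ∀ i b, 0 ≤ V i b) (hw : ∀ i, 0 < w i) (i : Fin n) :
    0 ≤ WMMS V w i := by
  obtain ⟨A, -, hA⟩ := exists_isPartition_mul_le_WMMS V w i
  exact (mul_nonneg (costOf_nonneg hV i _) (div_pos (hw i) (hw i)).le).trans (hA i)

lemma MMS_eq_WMMS_one (V : Fin n → Fin m → ℝ) (i : Fin n) :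
    MMS V i = WMMS V (fun _ ↦ 1) i := by
  simp [MMS, WMMS]

lemma WMMS_div_const (V : Fin n → Fin m → ℝ) (w : Fin n → ℝ) {s : ℝ} (hs : s ≠ 0) :
    WMMS V (fun j ↦ w j / s) = WMMS V w := by
  funext i
  simp only [WMMS, div_div_div_cancel_right₀ hs]

/-- The agents `f i` form an instance of their own with entitlements `w'`, for which an optimal
partition of the given instance, its bundles redistributed along `g`, is a candidate. -/
lemma WMMS_comp_le {f : Fin n' → Fin n} {w' : Fin n' → ℝ} {i : Fin n'} {α : ℝ}
    (hV : ∀ i b, 0 ≤ V i b) (hw : ∀ i, 0 < w i) (hw' : ∀ i, 0 < w' i) (g : Fin n → Fin n')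
    (hα : ∀ j, (∑ l with g l = j, w l) / w (f i) * (w' i / w' j) ≤ α) :
    WMMS (V ∘ f) w' i ≤ α * WMMS V w (f i) := by
  obtain ⟨A, hA, hcost⟩ := exists_isPartition_mul_le_WMMS V w (f i)
  have hbundle (l : Fin n) : costOf V (f i) (A l) ≤ w l / w (f i) * WMMS V w (f i) := by
    rw [← div_le_iff₀' (div_pos (hw l) (hw _)), div_eq_mul_inv, inv_div]
    exact hcost l
  refine WMMS_le (hA.reassign g) fun j ↦ ?_
  calc costOf (V ∘ f) i (reassign g A j) * (w' i / w' j)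
      = (∑ l with g l = j, costOf V (f i) (A l)) * (w' i / w' j) := by
        rw [← costOf_reassign V (f i) hA]; rfl
    _ ≤ (∑ l with g l = j, w l / w (f i) * WMMS V w (f i)) * (w' i / w' j) :=
        mul_le_mul_of_nonneg_right (sum_le_sum fun l _ ↦ hbundle l)
          (div_pos (hw' i) (hw' j)).le
    _ = (∑ l with g l = j, w l) / w (f i) * (w' i / w' j) * WMMS V w (f i) := by
        rw [← sum_mul, ← sum_div]; ring
    _ ≤ α * WMMS V w (f i) := mul_le_mul_of_nonneg_right (hα j) (WMMS_nonneg hV hw _)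

end Shares

/-- The instance with costs `V` and entitlements `w` admits an `α`-WMMS assignment. The entitlements
need not sum to `1`, since `WMMS` depends only on their ratios. -/
def AdmitsWMMS (α : ℝ) (V : Fin n → Fin m → ℝ) (w : Fin n → ℝ) : Prop :=
  ∃ S : Fin n → Finset (Fin m), IsPartition S ∧ ∀ i, costOf V i (S i) ≤ α * WMMS V w i

section Assignments

variable {V : Fin n → Fin m → ℝ} {w : Fin n → ℝ} {α β k : ℝ}

lemma AdmitsWMMS.mono (h : AdmitsWMMS α V w) (hV : ∀ i b, 0 ≤ V i b) (hw : ∀ i, 0 < w i)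
    (hαβ : α ≤ β) : AdmitsWMMS β V w := by
  obtain ⟨S, hS, hcost⟩ := h
  exact ⟨S, hS, fun i ↦ (hcost i).trans (mul_le_mul_of_nonneg_right hαβ (WMMS_nonneg hV hw i))⟩

lemma admitsWMMS_of_normalized {V : Fin (n + 1) → Fin m → ℝ} {w : Fin (n + 1) → ℝ}
    (h : ∀ u : Fin (n + 1) → ℝ, (∀ i, 0 < u i) → (∀ i, u i ≤ 1) → ∑ i, u i = 1 →
      AdmitsWMMS α V u)
    (hw : ∀ i, 0 < w i) : AdmitsWMMS α V w := by
  have hsum : 0 < ∑ i, w i := sum_pos (fun i _ ↦ hw i) univ_nonempty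
  have hnormalized : AdmitsWMMS α V fun i ↦ w i / ∑ j, w j :=
    h _ (fun i ↦ div_pos (hw i) hsum)
      (fun i ↦ div_le_one_of_le₀ (single_le_sum (fun j _ ↦ (hw j).le) (mem_univ i)) hsum.le)
      (by rw [← sum_div, div_self hsum.ne'])
  simpa only [AdmitsWMMS, WMMS_div_const V w hsum.ne'] using hnormalized

lemma AdmitsWMMS.of_comp {f : Fin n' → Fin n} {w' : Fin n' → ℝ} (h : AdmitsWMMS β (V ∘ f) w')
    (hf : f.Injective) (hV : ∀ i b, 0 ≤ V i b) (hw : ∀ i, 0 < w i) (hw' : ∀ i, 0 < w' i)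
    (hβ : 0 ≤ β) (hα : 0 ≤ α) (g : Fin n → Fin n')
    (hratio : ∀ i j, (∑ l with g l = j, w l) / w (f i) * (w' i / w' j) ≤ α) :
    AdmitsWMMS (β * α) V w := by
  obtain ⟨S, hS, hcost⟩ := h
  refine ⟨reassign f S, hS.reassign f, fun i ↦ ?_⟩
  by_cases hi : ∃ l, f l = i
  · obtain ⟨l, rfl⟩ := hi
    calc costOf V (f l) (reassign f S (f l)) = costOf (V ∘ f) l (S l) := by
          rw [reassign_apply_of_injective hf]; rfl
      _ ≤ β * WMMS (V ∘ f) w' l := hcost l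
      _ ≤ β * (α * WMMS V w (f l)) :=
          mul_le_mul_of_nonneg_left (WMMS_comp_le hV hw hw' g (hratio l)) hβ
      _ = β * α * WMMS V w (f l) := (mul_assoc ..).symm
  · rw [reassign_eq_empty S fun l hl ↦ hi ⟨l, hl⟩, costOf, sum_empty]
    exact mul_nonneg (mul_nonneg hβ hα) (WMMS_nonneg hV hw i)

lemma admitsWMMS_of_MMS {lo hi : ℝ}
    (h : ∃ S : Fin n → Finset (Fin m), IsPartition S ∧ ∀ i, costOf V i (S i) ≤ β * MMS V i)
    (hV : ∀ i b, 0 ≤ V i b) (hβ : 0 ≤ β) (hlo : 0 < lo) (hhi : 0 ≤ hi)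
    (hw_ge : ∀ i, lo ≤ w i) (hw_le : ∀ i, w i ≤ hi) : AdmitsWMMS (β * (hi / lo)) V w := by
  have hequal : AdmitsWMMS β (V ∘ id) fun _ ↦ 1 := by
    simp only [MMS_eq_WMMS_one] at h
    exact h
  refine hequal.of_comp Function.injective_id hV (fun i ↦ hlo.trans_le (hw_ge i))
    (fun _ ↦ one_pos) hβ (div_nonneg hhi hlo.le) id fun i j ↦ ?_
  simpa [filter_eq'] using div_le_div₀ hhi (hw_le j) hlo (hw_ge i)

lemma sum_filter_insertNth_id (w : Fin (n + 1) → ℝ) (p : Fin (n + 1)) (r j : Fin n) :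
    ∑ l with p.insertNth (α := fun _ ↦ Fin n) r id l = j, w l =
      (if r = j then w p else 0) + w (p.succAbove j) := by
  simp [sum_filter, Fin.sum_univ_succAbove _ p]

lemma AdmitsWMMS.of_succAbove {V : Fin (n + 1) → Fin m → ℝ} {w : Fin (n + 1) → ℝ}
    {p : Fin (n + 1)} (h : AdmitsWMMS k (V ∘ p.succAbove) (w ∘ p.succAbove))
    (hV : ∀ i b, 0 ≤ V i b) (hw : ∀ i, 0 < w i) (hk : 0 ≤ k) (r : Fin n) :
    AdmitsWMMS (k * (1 + w p / w (p.succAbove r))) V w := by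
  have hratio_nonneg : 0 ≤ w p / w (p.succAbove r) := (div_pos (hw _) (hw _)).le
  refine h.of_comp p.succAbove_right_injective hV hw (fun i ↦ hw _) hk
    (add_nonneg zero_le_one hratio_nonneg) (p.insertNth r id) fun i j ↦ ?_
  rw [sum_filter_insertNth_id, Function.comp_apply, Function.comp_apply,
    div_mul_div_cancel₀ (hw _).ne', add_div, div_self (hw _).ne', add_comm]
  split_ifs with hrj
  · rw [hrj]
  · simpa using hratio_nonneg

end Assignments

lemma exists_min_max_succAbove (w : Fin (n + 2) → ℝ) :
    ∃ p r, (∀ i, w p ≤ w i) ∧ ∀ i, w i ≤ w (p.succAbove r) := by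
  obtain ⟨p, hp⟩ := Finite.exists_min w
  obtain ⟨r, hr⟩ := Finite.exists_max (w ∘ p.succAbove)
  exact ⟨p, r, hp, (Fin.forall_iff_succAbove p).2 ⟨hp _, hr⟩⟩

lemma mul_div_le_or_mul_one_add_div_le {k β c lo hi : ℝ} (hk : 0 ≤ k) (hc : 0 < c)
    (hlo : 0 < lo) (hhi : 0 < hi) (hkc : k * (c + β) ≤ c ^ 2) :
    β * (hi / lo) ≤ c ∨ k * (1 + lo / hi) ≤ c := by
  refine or_iff_not_imp_left.2 fun hlarge ↦ ?_
  have hlo_lt : lo / hi < β / c := by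
    rw [not_le, ← mul_div_assoc, lt_div_iff₀ hlo] at hlarge
    rw [div_lt_div_iff₀ hhi hc]
    linarith
  calc k * (1 + lo / hi) ≤ k * (1 + β / c) := by gcongr
    _ = k * (c + β) / c := by field_simp
    _ ≤ c := by rwa [div_le_iff₀ hc, ← sq]

theorem three_agent_WMMS_general {k β c : ℝ} (hk : 0 ≤ k) (hβ : 0 ≤ β) (hc : 0 < c)
    (hkc : k * (c + β) ≤ c ^ 2)
    (hfewer : ∀ (V : Fin (n + 1) → Fin m → ℝ) (w : Fin (n + 1) → ℝ),
      (∀ i b, 0 ≤ V i b) → (∀ i, 0 < w i) → (∀ i, w i ≤ 1) → ∑ i, w i = 1 → AdmitsWMMS k V w)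
    (hequal : ∀ V : Fin (n + 2) → Fin m → ℝ, (∀ i b, 0 ≤ V i b) →
      ∃ S : Fin (n + 2) → Finset (Fin m), IsPartition S ∧ ∀ i, costOf V i (S i) ≤ β * MMS V i)
    {V : Fin (n + 2) → Fin m → ℝ} {w : Fin (n + 2) → ℝ}
    (hV : ∀ i b, 0 ≤ V i b) (hw : ∀ i, 0 < w i) : AdmitsWMMS c V w := by
  obtain ⟨p, r, hmin, hmax⟩ := exists_min_max_succAbove w
  obtain hsmall | hlarge := mul_div_le_or_mul_one_add_div_le hk hc (hw p) (hw (p.succAbove r)) hkc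
  · exact (admitsWMMS_of_MMS (hequal V hV) hV hβ (hw p) (hw _).le hmin hmax).mono hV hw hsmall
  · have hothers : AdmitsWMMS k (V ∘ p.succAbove) (w ∘ p.succAbove) :=
      admitsWMMS_of_normalized (fun u ↦ hfewer _ u fun i ↦ hV _) fun i ↦ hw _
    exact (hothers.of_succAbove hV hw hk r).mono hV hw hlarge

end ChoreDivision

lemma approximation_ratio_sq {k c : ℝ} (hk : k = (√3 + 1) / 2)
    (hc : c = (13 + 13 * √3 + √(2236 + 1898 * √3)) / 52) :
    c ^ 2 = k * (c + 15 / 13) := by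
  have hsqrt : √3 ^ 2 = 3 := Real.sq_sqrt (by norm_num)
  have hdiscr : (2 * c - k) ^ 2 = k ^ 2 + 4 * (15 / 13) * k := by
    have hroot : 2 * c - k = √(2236 + 1898 * √3) / 26 := by rw [hc, hk]; ring
    rw [hroot, div_pow, Real.sq_sqrt (by positivity), hk]
    linear_combination -hsqrt / 4
  linear_combination hdiscr / 4

/-- Theorem for three agents: assuming the two-agent
`k`-WMMS guarantee (`k = (√3+1)/2`) and the symmetric three-agent `(15/13)`-MMS
guarantee, every three-agent instance admits a `c`-WMMS assignment, where
`c = (13 + 13√3 + √(2236 + 1898√3))/52 ≈ 2.1122`. -/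
theorem three_agent_WMMS (k c : ℝ)
    (hk : k = (Real.sqrt 3 + 1) / 2)
    (hc : c = (13 + 13 * Real.sqrt 3 + Real.sqrt (2236 + 1898 * Real.sqrt 3)) / 52)
    (h2 : ∀ (m : ℕ) (V : Fin 2 → Fin m → ℝ) (w : Fin 2 → ℝ),
      (∀ i b, 0 ≤ V i b) → (∀ i, 0 < w i) → (∀ i, w i ≤ 1) → (∑ i, w i = 1) →
      ∃ S : Fin 2 → Finset (Fin m), IsPartition S ∧
        ∀ i, costOf V i (S i) ≤ k * WMMS V w i)
    (h3 : ∀ (m : ℕ) (V : Fin 3 → Fin m → ℝ), (∀ i b, 0 ≤ V i b) →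
      ∃ S : Fin 3 → Finset (Fin m), IsPartition S ∧
        ∀ i, costOf V i (S i) ≤ (15 / 13) * MMS V i) :
    ∀ (m : ℕ) (V : Fin 3 → Fin m → ℝ) (w : Fin 3 → ℝ),
      (∀ i b, 0 ≤ V i b) → (∀ i, 0 < w i) → (∀ i, w i ≤ 1) → (∑ i, w i = 1) →
      ∃ S : Fin 3 → Finset (Fin m), IsPartition S ∧
        ∀ i, costOf V i (S i) ≤ c * WMMS V w i := by
  subst hk hc
  exact fun m V w hV hw _ _ ↦ three_agent_WMMS_general (by positivity) (by norm_num) (by positivity)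
    (approximation_ratio_sq rfl rfl).ge (h2 m) (h3 m) hV hw
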